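/- arXiv:1007.1575 — 3 statements merged into one kernel-verified Lean document; each statement's English description precedes it below -/
import Mathlib

section
/- Let P, Q1, Q2 be orthogonal projections on H with ‖P − Q1‖ < 1 and ‖P − Q2‖ < 1, with angular operators X1, X2 for P such that Ran Q1 = G(X1) and Ran Q2 = G(X2). Let U1 = (P + X1)(I + X1*X1)^{-1/2} P + (P⊥ − X1*)(I + X1 X1*)^{-1/2} P⊥ and Q := U1* Q2 U1. Assume that Ran Q = G(Z) for some angular operator Z for P, and that the operator I + X2*X1 maps Ran P onto Ran P. Then X2 − X1 = (I + X1 X1*)^{1/2} Z (I + X1*X1)^{-1/2} (I + X1*X2). -/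
open ContinuousLinearMap

/-- `P` is an orthogonal projection: `P = P* = P²`. -/
def IsOrthogonalProjection {H : Type*} [NormedAddCommGroup H] [InnerProductSpace ℂ H]
    [CompleteSpace H] (P : H →L[ℂ] H) : Prop :=
  IsSelfAdjoint P ∧ P * P = P

/-- `X` is an angular operator for the orthogonal projection `P`: `X = P⊥ X P`. -/
def IsAngularOperator {H : Type*} [NormedAddCommGroup H] [InnerProductSpace ℂ H]
    [CompleteSpace H] (P X : H →L[ℂ] H) : Prop :=
  X = (1 - P) * X * P

/-- `Ran Q` is the graph subspace `G(X) = {u + X u : u ∈ Ran P}`. -/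
def HasGraphRange {H : Type*} [NormedAddCommGroup H] [InnerProductSpace ℂ H]
    [CompleteSpace H] (P X Q : H →L[ℂ] H) : Prop :=
  Set.range ⇑Q = (fun u => u + X u) '' Set.range ⇑P

/-- The unitary operator
`U₁ = (P + X₁)(I + X₁*X₁)^{-1/2} P + (P⊥ − X₁*)(I + X₁X₁*)^{-1/2} P⊥`. -/
noncomputable def angularUnitary {H : Type*} [NormedAddCommGroup H] [InnerProductSpace ℂ H]
    [CompleteSpace H] (P X₁ : H →L[ℂ] H) : H →L[ℂ] H :=
  (P + X₁) * Ring.inverse (CFC.sqrt (1 + adjoint X₁ * X₁)) * P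
    + ((1 - P) - adjoint X₁) * Ring.inverse (CFC.sqrt (1 + X₁ * adjoint X₁)) * (1 - P)

/-!
Write `a = (1 + X₁*X₁)^{-1/2}` and `b = (1 + X₁X₁*)^{-1/2}`. Then `U₁ = (1 + (X₁ - X₁*)) a b` is
invertible, because `X₁ - X₁*` is skew-adjoint. So `U₁*` maps `Ran Q₂ = G(X₂)` onto
`Ran (U₁* Q₂ U₁) = G(Z)`. On the other hand `U₁* (P + X₂) = a (P + X₁*X₂) + b (X₂ - X₁)`, where the
first summand takes values in `Ran P` and the second in `Ran P⊥`. Having values in `G(Z)` therefore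
means `b (X₂ - X₁) = Z a (P + X₁*X₂)`, and it remains to multiply by `b⁻¹` from the left.
-/

section CStarAlgebra

variable {A : Type*} [CStarAlgebra A]

theorem isUnit_one_add_of_mem_skewAdjoint {k : A} (hk : k ∈ skewAdjoint A) : IsUnit (1 + k) := by
  let _ := CStarAlgebra.spectralOrder A
  let _ := CStarAlgebra.spectralOrderedRing A
  have h_commute : Commute (1 - k) (1 + k) :=
    (Commute.one_right _).add_right ((Commute.one_left k).sub_left (Commute.refl k))
  have h_mul : (1 - k) * (1 + k) = 1 + star k * k := by
    rw [skewAdjoint.mem_iff.mp hk]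
    noncomm_ring
  have h_unit : IsUnit ((1 - k) * (1 + k)) :=
    h_mul ▸ CStarAlgebra.isUnit_of_le 1 (le_add_of_nonneg_right (star_mul_self_nonneg k))
  exact (h_commute.isUnit_mul_iff.mp h_unit).2

variable [PartialOrder A] [StarOrderedRing A]

/-- The operator `(1 + a)^{-1/2}` for `a ≥ 0`, written with `Ring.inverse` and `CFC.sqrt` as in
`angularUnitary`. -/
noncomputable def invSqrtOneAdd (a : A) : A :=
  Ring.inverse (CFC.sqrt (1 + a))

theorem isSelfAdjoint_invSqrtOneAdd (a : A) : IsSelfAdjoint (invSqrtOneAdd a) :=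
  (IsSelfAdjoint.of_nonneg (CFC.sqrt_nonneg _)).ringInverse

variable {a b : A}

theorem isUnit_sqrt_one_add (ha : 0 ≤ a) : IsUnit (CFC.sqrt (1 + a)) :=
  (CFC.isUnit_sqrt_iff _ (add_nonneg zero_le_one ha)).mpr
    (CStarAlgebra.isUnit_of_le 1 (le_add_of_nonneg_right ha))

theorem isUnit_invSqrtOneAdd (ha : 0 ≤ a) : IsUnit (invSqrtOneAdd a) :=
  (isUnit_sqrt_one_add ha).ringInverse

theorem commute_invSqrtOneAdd (ha : 0 ≤ a) (hab : Commute a b) : Commute (invSqrtOneAdd a) b := by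
  have h_sqrt : Commute (CFC.sqrt (1 + a)) b :=
    Commute.cfcₙ_nnreal ((Commute.one_left b).add_left hab) NNReal.sqrt
  rw [invSqrtOneAdd, Ring.inverse_of_isUnit (isUnit_sqrt_one_add ha)]
  exact Commute.units_inv_left h_sqrt

theorem sqrt_one_add_mul_of_mul_eq_zero (ha : 0 ≤ a) (hab : a * b = 0) :
    CFC.sqrt (1 + a) * b = b := by
  set s := CFC.sqrt (1 + a)
  have h_sq : s * s = 1 + a := CFC.sqrt_mul_sqrt_self _ (add_nonneg zero_le_one ha)
  have h_unit : IsUnit (1 + s) :=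
    CStarAlgebra.isUnit_of_le 1 (le_add_of_nonneg_right (CFC.sqrt_nonneg _))
  refine h_unit.mul_left_cancel ?_
  calc (1 + s) * (s * b) = s * b + s * s * b := by noncomm_ring
    _ = s * b + b := by rw [h_sq, add_mul, hab, one_mul, add_zero]
    _ = (1 + s) * b := by noncomm_ring

theorem invSqrtOneAdd_mul_of_mul_eq_zero (ha : 0 ≤ a) (hab : a * b = 0) :
    invSqrtOneAdd a * b = b :=
  (Ring.inverse_mul_eq_iff_eq_mul _ _ _ (isUnit_sqrt_one_add ha)).mpr
    (sqrt_one_add_mul_of_mul_eq_zero ha hab).symm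

end CStarAlgebra

theorem range_mul_mul_of_surjective {R M : Type*} [Semiring R] [TopologicalSpace M]
    [AddCommMonoid M] [Module R M] {U : M →L[R] M} (hU : Function.Surjective U) (V Q : M →L[R] M) :
    Set.range ⇑(V * Q * U) = V '' Set.range ⇑Q := by
  rw [← Set.range_comp]
  exact hU.range_comp (V ∘ Q)

section Operators

variable {H : Type*} [NormedAddCommGroup H] [InnerProductSpace ℂ H] [CompleteSpace H]
  {P Q X Y Z C E : H →L[ℂ] H}

namespace IsAngularOperator

theorem proj_mul (hP : IsIdempotentElem P) (hX : IsAngularOperator P X) : P * X = 0 := by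
  rw [hX, ← mul_assoc, ← mul_assoc, hP.mul_one_sub_self, zero_mul, zero_mul]

theorem mul_proj (hP : IsIdempotentElem P) (hX : IsAngularOperator P X) : X * P = X := by
  rw [hX, mul_assoc, hP.eq]

theorem mul_eq_zero (hP : IsIdempotentElem P) (hX : IsAngularOperator P X)
    (hY : IsAngularOperator P Y) : X * Y = 0 := by
  rw [← hX.mul_proj hP, mul_assoc, hY.proj_mul hP, mul_zero]

theorem proj_mul_adjoint (hP : IsOrthogonalProjection P) (hX : IsAngularOperator P X) :
    P * adjoint X = adjoint X := by
  have h := congrArg star (hX.mul_proj hP.2)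
  rwa [star_mul, hP.1.star_eq] at h

theorem adjoint_mul_proj (hP : IsOrthogonalProjection P) (hX : IsAngularOperator P X) :
    adjoint X * P = 0 := by
  have h := congrArg star (hX.proj_mul hP.2)
  rwa [star_mul, hP.1.star_eq, star_zero] at h

theorem hasGraphRange_proj_add (hP : IsIdempotentElem P) (hX : IsAngularOperator P X) :
    HasGraphRange P X (P + X) := by
  rw [HasGraphRange, ← Set.range_comp]
  congr 1
  ext u
  exact congrArg (P u + ·) (DFunLike.congr_fun (hX.mul_proj hP) u).symm

theorem proj_add_mul_of_hasGraphRange (hP : IsIdempotentElem P) (hZ : IsAngularOperator P Z)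
    (hQ : HasGraphRange P Z Q) : (P + Z) * Q = Q := by
  have h_idem : (P + Z) * (P + Z) = P + Z := by
    simp only [add_mul, mul_add, hP.eq, hZ.proj_mul hP, hZ.mul_proj hP, hZ.mul_eq_zero hP hZ,
      add_zero]
  ext u
  obtain ⟨v, hv⟩ : Q u ∈ Set.range ⇑(P + Z) := by
    rw [hZ.hasGraphRange_proj_add hP, ← hQ]
    exact Set.mem_range_self u
  change (P + Z) (Q u) = Q u
  rw [← hv]
  exact DFunLike.congr_fun h_idem v

theorem eq_mul_of_hasGraphRange_add (hP : IsIdempotentElem P) (hZ : IsAngularOperator P Z)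
    (hC : P * C = C) (hE : P * E = 0) (h : HasGraphRange P Z (C + E)) : E = Z * C := by
  have hZE : Z * E = 0 := by rw [← hZ.mul_proj hP, mul_assoc, hE, mul_zero]
  have h_graph : (P + Z) * (C + E) = C + E := hZ.proj_add_mul_of_hasGraphRange hP h
  rw [add_mul, mul_add, mul_add, hC, hE, hZE, add_zero, add_zero] at h_graph
  exact (add_left_cancel h_graph).symm

theorem commute_invSqrtOneAdd_adjoint_mul_self (hP : IsOrthogonalProjection P)
    (hX : IsAngularOperator P X) : Commute (invSqrtOneAdd (adjoint X * X)) P := by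
  refine commute_invSqrtOneAdd (star_mul_self_nonneg X) ?_
  rw [commute_iff_eq, mul_assoc, hX.mul_proj hP.2, ← mul_assoc, hX.proj_mul_adjoint hP]

theorem invSqrtOneAdd_adjoint_mul_self_mul_compl (hP : IsIdempotentElem P)
    (hX : IsAngularOperator P X) : invSqrtOneAdd (adjoint X * X) * (1 - P) = 1 - P :=
  invSqrtOneAdd_mul_of_mul_eq_zero (star_mul_self_nonneg X) <| by
    rw [mul_assoc, mul_sub, mul_one, hX.mul_proj hP, sub_self, mul_zero]

theorem commute_invSqrtOneAdd_self_mul_adjoint (hP : IsOrthogonalProjection P)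
    (hX : IsAngularOperator P X) : Commute (invSqrtOneAdd (X * adjoint X)) P := by
  refine commute_invSqrtOneAdd (mul_star_self_nonneg X) ?_
  rw [commute_iff_eq, mul_assoc, hX.adjoint_mul_proj hP, ← mul_assoc, hX.proj_mul hP.2, mul_zero,
    zero_mul]

theorem invSqrtOneAdd_self_mul_adjoint_mul_proj (hP : IsOrthogonalProjection P)
    (hX : IsAngularOperator P X) : invSqrtOneAdd (X * adjoint X) * P = P :=
  invSqrtOneAdd_mul_of_mul_eq_zero (mul_star_self_nonneg X) <| by
    rw [mul_assoc, hX.adjoint_mul_proj hP, mul_zero]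

theorem angularUnitary_eq (hP : IsOrthogonalProjection P) (hX : IsAngularOperator P X) :
    angularUnitary P X = (1 + (X - adjoint X)) *
      (invSqrtOneAdd (adjoint X * X) * invSqrtOneAdd (X * adjoint X)) := by
  have ha := (hX.commute_invSqrtOneAdd_adjoint_mul_self hP).eq
  have haP := hX.invSqrtOneAdd_adjoint_mul_self_mul_compl hP.2
  have hb := ((Commute.one_right _).sub_right (hX.commute_invSqrtOneAdd_self_mul_adjoint hP)).eq
  have hbP := hX.invSqrtOneAdd_self_mul_adjoint_mul_proj hP
  change (P + X) * invSqrtOneAdd (adjoint X * X) * P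
    + ((1 - P) - adjoint X) * invSqrtOneAdd (X * adjoint X) * (1 - P) = _
  set a := invSqrtOneAdd (adjoint X * X)
  set b := invSqrtOneAdd (X * adjoint X)
  have h_proj : (1 + (X - adjoint X)) * P = P + X := by
    rw [add_mul, sub_mul, one_mul, hX.mul_proj hP.2, hX.adjoint_mul_proj hP, sub_zero]
  have h_compl : (1 + (X - adjoint X)) * (1 - P) = 1 - P - adjoint X := by
    rw [mul_sub, mul_one, h_proj]
    abel
  have h_diag : P * (a * P) + (1 - P) * (b * (1 - P)) = a * b := by
    calc P * (a * P) + (1 - P) * (b * (1 - P))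
        = a * P + b * (1 - P) := by
          rw [ha, hb, ← mul_assoc, ← mul_assoc, hP.2, IsIdempotentElem.one_sub hP.2]
      _ = a * (b * P) + a * (1 - P) * b := by rw [hbP, haP, hb]
      _ = a * (b * P) + a * (b * (1 - P)) := by rw [mul_assoc, hb]
      _ = a * b := by noncomm_ring
  rw [← h_proj, ← h_compl, ← h_diag]
  noncomm_ring

theorem isUnit_angularUnitary (hP : IsOrthogonalProjection P) (hX : IsAngularOperator P X) :
    IsUnit (angularUnitary P X) := by
  have h_skew : X - adjoint X ∈ skewAdjoint (H →L[ℂ] H) := by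
    rw [skewAdjoint.mem_iff, star_sub, ← star_eq_adjoint, star_star, neg_sub]
  rw [hX.angularUnitary_eq hP]
  exact (isUnit_one_add_of_mem_skewAdjoint h_skew).mul
    ((isUnit_invSqrtOneAdd (star_mul_self_nonneg X)).mul
      (isUnit_invSqrtOneAdd (mul_star_self_nonneg X)))

theorem adjoint_angularUnitary (hP : IsOrthogonalProjection P) (hX : IsAngularOperator P X) :
    adjoint (angularUnitary P X) =
      invSqrtOneAdd (X * adjoint X) * invSqrtOneAdd (adjoint X * X) * (1 + (adjoint X - X)) := by
  rw [hX.angularUnitary_eq hP, ← star_eq_adjoint, star_mul, star_mul,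
    (isSelfAdjoint_invSqrtOneAdd _).star_eq, (isSelfAdjoint_invSqrtOneAdd _).star_eq, star_add,
    star_one, star_sub, ← star_eq_adjoint, star_star]

theorem proj_mul_proj_add_adjoint_mul (hP : IsOrthogonalProjection P) (hX : IsAngularOperator P X)
    (Y : H →L[ℂ] H) : P * (P + adjoint X * Y) = P + adjoint X * Y := by
  rw [mul_add, hP.2, ← mul_assoc, hX.proj_mul_adjoint hP]

theorem proj_mul_sub (hP : IsIdempotentElem P) (hX : IsAngularOperator P X)
    (hY : IsAngularOperator P Y) : P * (Y - X) = 0 := by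
  rw [mul_sub, hY.proj_mul hP, hX.proj_mul hP, sub_zero]

theorem adjoint_angularUnitary_mul_proj_add (hP : IsOrthogonalProjection P)
    (hX : IsAngularOperator P X) (hY : IsAngularOperator P Y) :
    adjoint (angularUnitary P X) * (P + Y) =
      invSqrtOneAdd (adjoint X * X) * (P + adjoint X * Y)
        + invSqrtOneAdd (X * adjoint X) * (Y - X) := by
  have ha := (hX.commute_invSqrtOneAdd_adjoint_mul_self hP).eq
  have haP := hX.invSqrtOneAdd_adjoint_mul_self_mul_compl hP.2
  have hbP := hX.invSqrtOneAdd_self_mul_adjoint_mul_proj hP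
  rw [hX.adjoint_angularUnitary hP]
  set a := invSqrtOneAdd (adjoint X * X)
  set b := invSqrtOneAdd (X * adjoint X)
  set C := P + adjoint X * Y with hC_def
  set E := Y - X with hE_def
  have hC : P * C = C := hX.proj_mul_proj_add_adjoint_mul hP Y
  have hE : (1 - P) * E = E := by rw [sub_mul, one_mul, hX.proj_mul_sub hP.2 hY, sub_zero]
  have h_prod : (1 + (adjoint X - X)) * (P + Y) = C + E := by
    simp only [add_mul, sub_mul, mul_add, one_mul, hX.adjoint_mul_proj hP, hX.mul_proj hP.2,
      hX.mul_eq_zero hP.2 hY, hC_def, hE_def]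
    abel
  have h_baC : b * (a * C) = a * C := by
    rw [← hC, ← mul_assoc a, ha, mul_assoc P, ← mul_assoc b, hbP]
  have h_aE : a * E = E := by rw [← hE, ← mul_assoc, haP]
  rw [mul_assoc (b * a), h_prod, mul_add, mul_assoc, mul_assoc, h_baC, h_aE]

theorem mul_invSqrtOneAdd_mul_proj_add (hP : IsOrthogonalProjection P)
    (hX : IsAngularOperator P X) (hZ : IsAngularOperator P Z) (T : H →L[ℂ] H) :
    Z * (invSqrtOneAdd (adjoint X * X) * (P + T)) =
      Z * invSqrtOneAdd (adjoint X * X) * (1 + T) := by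
  rw [mul_add, (hX.commute_invSqrtOneAdd_adjoint_mul_self hP).eq, mul_add, ← mul_assoc,
    hZ.mul_proj hP.2, mul_add, mul_one, mul_assoc]

theorem hasGraphRange_mul_proj_add {U V : H →L[ℂ] H} (hP : IsIdempotentElem P)
    (hX : IsAngularOperator P X) (hXQ : HasGraphRange P X Q) (hU : Function.Surjective U)
    (hVQU : HasGraphRange P Z (V * Q * U)) : HasGraphRange P Z (V * (P + X)) := by
  have h_range : Set.range ⇑(P + X) = Set.range ⇑Q := (hX.hasGraphRange_proj_add hP).trans hXQ.symm
  calc Set.range ⇑(V * (P + X)) = V '' Set.range ⇑(P + X) := Set.range_comp V (P + X)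
    _ = Set.range ⇑(V * Q * U) := by rw [h_range, range_mul_mul_of_surjective hU]
    _ = (fun u => u + Z u) '' Set.range ⇑P := hVQU

end IsAngularOperator

theorem angle_addition_formula_general {P Q₂ X₁ X₂ Z : H →L[ℂ] H} (hP : IsOrthogonalProjection P)
    (hX₁ : IsAngularOperator P X₁) (hX₂ : IsAngularOperator P X₂) (hX₂g : HasGraphRange P X₂ Q₂)
    (hZ : IsAngularOperator P Z)
    (hZg : HasGraphRange P Z (adjoint (angularUnitary P X₁) * Q₂ * angularUnitary P X₁)) :
    X₂ - X₁ = CFC.sqrt (1 + X₁ * adjoint X₁) * Z *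
      Ring.inverse (CFC.sqrt (1 + adjoint X₁ * X₁)) * (1 + adjoint X₁ * X₂) := by
  have h_graph : HasGraphRange P Z (adjoint (angularUnitary P X₁) * (P + X₂)) :=
    hX₂.hasGraphRange_mul_proj_add hP.2 hX₂g
      (isUnit_iff_bijective.mp (hX₁.isUnit_angularUnitary hP)).surjective hZg
  rw [hX₁.adjoint_angularUnitary_mul_proj_add hP hX₂] at h_graph
  have h_eq : invSqrtOneAdd (X₁ * adjoint X₁) * (X₂ - X₁) =
      Z * invSqrtOneAdd (adjoint X₁ * X₁) * (1 + adjoint X₁ * X₂) := by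
    rw [← hX₁.mul_invSqrtOneAdd_mul_proj_add hP hZ]
    refine hZ.eq_mul_of_hasGraphRange_add hP.2 ?_ ?_ h_graph
    · rw [← mul_assoc, ← (hX₁.commute_invSqrtOneAdd_adjoint_mul_self hP).eq, mul_assoc,
        hX₁.proj_mul_proj_add_adjoint_mul hP]
    · rw [← mul_assoc, ← (hX₁.commute_invSqrtOneAdd_self_mul_adjoint hP).eq, mul_assoc,
        hX₁.proj_mul_sub hP.2 hX₂, mul_zero]
  rw [mul_assoc, mul_assoc, ← mul_assoc Z]
  exact (Ring.inverse_mul_eq_iff_eq_mul _ _ _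
    (isUnit_sqrt_one_add (mul_star_self_nonneg X₁))).mp h_eq

end Operators

/-- **angle addition formula.** Under the assumptions of the four projections
lemma, if moreover `Ran (U₁* Q₂ U₁) = G(Z)` for an angular operator `Z` for `P` and
`I + X₂*X₁` maps `Ran P` onto `Ran P`, then
`X₂ − X₁ = (I + X₁X₁*)^{1/2} Z (I + X₁*X₁)^{-1/2} (I + X₁*X₂)`. -/
theorem angle_addition_formula {H : Type*} [NormedAddCommGroup H] [InnerProductSpace ℂ H]
    [CompleteSpace H] [TopologicalSpace.SeparableSpace H]
    (P Q₁ Q₂ X₁ X₂ Z : H →L[ℂ] H)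
    (hP : IsOrthogonalProjection P) (hQ₁ : IsOrthogonalProjection Q₁)
    (hQ₂ : IsOrthogonalProjection Q₂)
    (hPQ₁ : ‖P - Q₁‖ < 1) (hPQ₂ : ‖P - Q₂‖ < 1)
    (hX₁ : IsAngularOperator P X₁) (hX₁g : HasGraphRange P X₁ Q₁)
    (hX₂ : IsAngularOperator P X₂) (hX₂g : HasGraphRange P X₂ Q₂)
    (hZ : IsAngularOperator P Z)
    (hZg : HasGraphRange P Z (adjoint (angularUnitary P X₁) * Q₂ * angularUnitary P X₁))
    (hfull : ⇑(1 + adjoint X₂ * X₁) '' Set.range ⇑P = Set.range ⇑P) :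
    X₂ - X₁ = CFC.sqrt (1 + X₁ * adjoint X₁) * Z *
      Ring.inverse (CFC.sqrt (1 + adjoint X₁ * X₁)) * (1 + adjoint X₁ * X₂) := by
  exact angle_addition_formula_general hP hX₁ hX₂ hX₂g hZ hZg
end

section
/- (Arcsine Law for smooth paths) Let γ : [a,b] → 𝒫 be a piecewise C¹-smooth path of orthogonal projections. Then arcsin(‖γ(b) − γ(a)‖) ≤ ∫_a^b ‖γ'(t)‖ dt, where the integrand is defined outside the finitely many non-smoothness points. -/
open ContinuousLinearMap

/-- A map `γ` is a piecewise `C¹`-smooth path on `[a,b]` if there is a partition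
`a = t₀ < … < t_n = b` such that `γ` is `C¹`-smooth on each `[t_j, t_{j+1}]`. -/
def PiecewiseC1On {E : Type*} [NormedAddCommGroup E] [NormedSpace ℝ E]
    (γ : ℝ → E) (a b : ℝ) : Prop :=
  ∃ (n : ℕ) (t : ℕ → ℝ), t 0 = a ∧ t n = b ∧ (∀ i < n, t i < t (i + 1)) ∧
    ∀ i < n, ContDiffOn ℝ 1 γ (Set.Icc (t i) (t (i + 1)))

/-!
For orthogonal projections `P` and `Q`, `arcsin ‖P - Q‖` is the supremum of the angles that nonzero
vectors in the range of one of them make with their images under the other. Since an orthogonal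
projection sends a vector to a point of its range at the smallest angle, the triangle inequality for
angles passes to `arcsin ‖P - Q‖`. As `arcsin u = u + o(u)` when `u → 0`, the distance from the
initial point of a path in the resulting pseudometric grows at rate at most `‖γ'‖`.
-/

open Set Filter Topology MeasureTheory InnerProductGeometry Real

section NormSub

variable {𝕜 E : Type*} [RCLike 𝕜] [NormedAddCommGroup E] [InnerProductSpace 𝕜 E]
  {K L : Submodule 𝕜 E} [K.HasOrthogonalProjection] [L.HasOrthogonalProjection] {s : ℝ}

lemma norm_starProjection_apply_le_of_mem_orthogonal (hs : 0 ≤ s)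
    (hL : ∀ y ∈ L, ‖y - K.starProjection y‖ ≤ s * ‖y‖) {x : E} (hx : x ∈ Kᗮ) :
    ‖L.starProjection x‖ ≤ s * ‖x‖ := by
  set y := L.starProjection x
  rcases eq_or_ne y 0 with hy | hy
  · rw [hy, norm_zero]
    positivity
  have inner_proj : inner 𝕜 (K.starProjection y) x = 0 := hx _ (K.starProjection_apply_mem y)
  refine le_of_mul_le_mul_left ?_ (norm_pos_iff.2 hy)
  calc
    ‖y‖ * ‖y‖ = RCLike.re (inner 𝕜 y x) := by
      rw [← sq]
      exact (L.re_inner_starProjection_eq_normSq x).symm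
    _ = RCLike.re (inner 𝕜 (y - K.starProjection y) x) := by
      rw [inner_sub_left, inner_proj, sub_zero]
    _ ≤ ‖y - K.starProjection y‖ * ‖x‖ := re_inner_le_norm _ _
    _ ≤ s * ‖y‖ * ‖x‖ := by
      gcongr
      exact hL y (L.starProjection_apply_mem x)
    _ = ‖y‖ * (s * ‖x‖) := by ring

lemma norm_starProjection_sub_starProjection_le (hs : 0 ≤ s)
    (hK : ∀ x ∈ K, ‖x - L.starProjection x‖ ≤ s * ‖x‖)
    (hL : ∀ y ∈ L, ‖y - K.starProjection y‖ ≤ s * ‖y‖) :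
    ‖K.starProjection - L.starProjection‖ ≤ s := by
  refine ContinuousLinearMap.opNorm_le_bound _ hs fun x => ?_
  set d := (K.starProjection - L.starProjection) x with hd
  have L_part : L.starProjection d = -L.starProjection (Kᗮ.starProjection x) := by
    simp [hd, L.starProjection_eq_self_iff.2 (L.starProjection_apply_mem x)]
  have L_perp_part :
      Lᗮ.starProjection d = K.starProjection x - L.starProjection (K.starProjection x) := by
    simp [hd, L.starProjection_eq_self_iff.2 (L.starProjection_apply_mem x)]
  have L_part_le : ‖L.starProjection d‖ ≤ s * ‖Kᗮ.starProjection x‖ := by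
    rw [L_part, norm_neg]
    exact norm_starProjection_apply_le_of_mem_orthogonal hs hL (Kᗮ.starProjection_apply_mem x)
  have L_perp_part_le : ‖Lᗮ.starProjection d‖ ≤ s * ‖K.starProjection x‖ := by
    rw [L_perp_part]
    exact hK _ (K.starProjection_apply_mem x)
  refine le_of_sq_le_sq ?_ (by positivity)
  calc
    ‖d‖ ^ 2 = ‖L.starProjection d‖ ^ 2 + ‖Lᗮ.starProjection d‖ ^ 2 :=
      Submodule.norm_sq_eq_add_norm_sq_starProjection d L
    _ ≤ (s * ‖Kᗮ.starProjection x‖) ^ 2 + (s * ‖K.starProjection x‖) ^ 2 := by gcongr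
    _ = (s * ‖x‖) ^ 2 := by
      rw [mul_pow s ‖x‖, Submodule.norm_sq_eq_add_norm_sq_starProjection x K]
      ring

end NormSub

section Angle

variable {E : Type*} [NormedAddCommGroup E] [InnerProductSpace ℝ E]
  (K L M : Submodule ℝ E) [K.HasOrthogonalProjection] [L.HasOrthogonalProjection]
  [M.HasOrthogonalProjection]

lemma inner_starProjection_sub_starProjection_eq_zero (x : E) :
    inner ℝ (K.starProjection x) (x - K.starProjection x) = 0 :=
  K.sub_starProjection_mem_orthogonal x _ (K.starProjection_apply_mem x)

lemma angle_starProjection_self_eq_arccos (x : E) :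
    angle (K.starProjection x) x = arccos (‖K.starProjection x‖ / ‖x‖) := by
  simpa only [add_sub_cancel] using
    angle_add_eq_arccos_of_inner_eq_zero (inner_starProjection_sub_starProjection_eq_zero K x)

lemma angle_starProjection_self_eq_arcsin {x : E} (hx : x ≠ 0) :
    angle (K.starProjection x) x = arcsin (‖x - K.starProjection x‖ / ‖x‖) := by
  have ne_zero : K.starProjection x ≠ 0 ∨ x - K.starProjection x ≠ 0 := by
    by_contra! ⟨proj_eq_zero, sub_eq_zero⟩
    exact hx (by rw [← sub_add_cancel x (K.starProjection x), sub_eq_zero, proj_eq_zero, add_zero])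
  simpa only [add_sub_cancel] using angle_add_eq_arcsin_of_inner_eq_zero
    (inner_starProjection_sub_starProjection_eq_zero K x) ne_zero

variable {K} in
lemma angle_starProjection_self_le {z : E} (hz : z ∈ K) (x : E) :
    angle (K.starProjection x) x ≤ angle z x := by
  have inner_le : inner ℝ z x ≤ ‖K.starProjection x‖ * ‖z‖ :=
    calc
      inner ℝ z x = inner ℝ z (K.starProjection x) := by
        rw [← K.inner_starProjection_left_eq_right, K.starProjection_eq_self_iff.2 hz]
      _ ≤ ‖z‖ * ‖K.starProjection x‖ := real_inner_le_norm _ _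
      _ = ‖K.starProjection x‖ * ‖z‖ := mul_comm _ _
  rw [angle_starProjection_self_eq_arccos, angle, ← div_div]
  refine arccos_le_arccos (div_le_div_of_nonneg_right ?_ (norm_nonneg x))
  exact div_le_of_le_mul₀ (norm_nonneg z) (norm_nonneg _) inner_le

variable {K} in
lemma angle_starProjection_self_le_arcsin {x : E} (hxK : x ∈ K) (hx : x ≠ 0) :
    angle (L.starProjection x) x ≤ arcsin ‖K.starProjection - L.starProjection‖ := by
  rw [angle_starProjection_self_eq_arcsin L hx]
  refine arcsin_le_arcsin ((div_le_iff₀ (norm_pos_iff.2 hx)).2 ?_)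
  simpa [K.starProjection_eq_self_iff.2 hxK]
    using (K.starProjection - L.starProjection).le_opNorm x

variable {K L} in
lemma arcsin_norm_starProjection_sub_le {θ : ℝ} (hθ : 0 ≤ θ)
    (hK : ∀ x ∈ K, x ≠ 0 → angle (L.starProjection x) x ≤ θ)
    (hL : ∀ y ∈ L, y ≠ 0 → angle (K.starProjection y) y ≤ θ) :
    arcsin ‖K.starProjection - L.starProjection‖ ≤ θ := by
  rcases le_or_gt (π / 2) θ with hbig | hsmall
  · exact (arcsin_le_pi_div_two _).trans hbig
  have hθ_mem : θ ∈ Ico (-(π / 2)) (π / 2) := ⟨by linarith [pi_pos], hsmall⟩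
  have norm_sub_le (F : Submodule ℝ E) [F.HasOrthogonalProjection] (x : E)
      (h : x ≠ 0 → angle (F.starProjection x) x ≤ θ) :
      ‖x - F.starProjection x‖ ≤ sin θ * ‖x‖ := by
    rcases eq_or_ne x 0 with rfl | hx
    · simp
    rw [← div_le_iff₀ (norm_pos_iff.2 hx), ← arcsin_le_iff_le_sin' hθ_mem,
      ← angle_starProjection_self_eq_arcsin F hx]
    exact h hx
  rw [arcsin_le_iff_le_sin' hθ_mem]
  exact norm_starProjection_sub_starProjection_le
    (sin_nonneg_of_nonneg_of_le_pi hθ (by linarith [pi_pos]))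
    (fun x hx => norm_sub_le L x (hK x hx)) (fun y hy => norm_sub_le K y (hL y hy))

variable {K} in
lemma angle_starProjection_self_le_arcsin_add_arcsin {x : E} (hxK : x ∈ K) (hx : x ≠ 0) :
    angle (M.starProjection x) x ≤ arcsin ‖K.starProjection - L.starProjection‖ +
      arcsin ‖L.starProjection - M.starProjection‖ := by
  set y := L.starProjection x
  have hxy : angle y x ≤ arcsin ‖K.starProjection - L.starProjection‖ :=
    angle_starProjection_self_le_arcsin L hxK hx
  rcases eq_or_ne y 0 with hy | hy
  · -- By convention `angle 0 x = π / 2`, so the first summand alone bounds every angle here.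
    calc
      angle (M.starProjection x) x ≤ angle y x :=
        angle_starProjection_self_le (hy ▸ M.zero_mem) x
      _ ≤ _ := hxy.trans (le_add_of_nonneg_right (arcsin_nonneg.2 (norm_nonneg _)))
  · have hyz : angle (M.starProjection y) y ≤ arcsin ‖L.starProjection - M.starProjection‖ :=
      angle_starProjection_self_le_arcsin M (L.starProjection_apply_mem x) hy
    calc
      angle (M.starProjection x) x ≤ angle (M.starProjection y) x :=
        angle_starProjection_self_le (M.starProjection_apply_mem y) x
      _ ≤ angle (M.starProjection y) y + angle y x := angle_le_angle_add_angle _ _ _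
      _ ≤ _ := by linarith

lemma arcsin_norm_starProjection_sub_le_add :
    arcsin ‖K.starProjection - M.starProjection‖ ≤
      arcsin ‖K.starProjection - L.starProjection‖ +
      arcsin ‖L.starProjection - M.starProjection‖ := by
  refine arcsin_norm_starProjection_sub_le
    (add_nonneg (arcsin_nonneg.2 (norm_nonneg _)) (arcsin_nonneg.2 (norm_nonneg _)))
    (fun x hxK hx => angle_starProjection_self_le_arcsin_add_arcsin L M hxK hx) fun z hzM hz => ?_
  rw [add_comm, norm_sub_rev L.starProjection, norm_sub_rev K.starProjection]
  exact angle_starProjection_self_le_arcsin_add_arcsin L K hzM hz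

end Angle

lemma exists_restrictScalars_eq_starProjection {𝕜 E : Type*} [RCLike 𝕜] [NormedAddCommGroup E]
    [InnerProductSpace 𝕜 E] {P : E →L[𝕜] E} (hP : (P : E →ₗ[𝕜] E).IsSymmetricProjection) :
    letI := InnerProductSpace.rclikeToReal 𝕜 E
    ∃ (K : Submodule ℝ E) (_ : K.HasOrthogonalProjection),
      P.restrictScalars ℝ = K.starProjection := by
  let := InnerProductSpace.rclikeToReal 𝕜 E
  have symmetric : ((P.restrictScalars ℝ : E →L[ℝ] E) : E →ₗ[ℝ] E).IsSymmetricProjection :=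
    ⟨LinearMap.ext fun x => DFunLike.congr_fun hP.isIdempotentElem x,
      fun x y => congrArg RCLike.re (hP.isSymmetric x y)⟩
  obtain ⟨K, hK, h⟩ := LinearMap.isSymmetricProjection_iff_eq_coe_starProjection.1 symmetric
  exact ⟨K, hK, ContinuousLinearMap.coe_injective h⟩

theorem arcsin_norm_sub_le_add_of_isSymmetricProjection {𝕜 E : Type*} [RCLike 𝕜]
    [NormedAddCommGroup E] [InnerProductSpace 𝕜 E] {P Q R : E →L[𝕜] E}
    (hP : (P : E →ₗ[𝕜] E).IsSymmetricProjection) (hQ : (Q : E →ₗ[𝕜] E).IsSymmetricProjection)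
    (hR : (R : E →ₗ[𝕜] E).IsSymmetricProjection) :
    arcsin ‖P - R‖ ≤ arcsin ‖P - Q‖ + arcsin ‖Q - R‖ := by
  let := InnerProductSpace.rclikeToReal 𝕜 E
  obtain ⟨K, _, hK⟩ := exists_restrictScalars_eq_starProjection hP
  obtain ⟨L, _, hL⟩ := exists_restrictScalars_eq_starProjection hQ
  obtain ⟨M, _, hM⟩ := exists_restrictScalars_eq_starProjection hR
  have triangle := arcsin_norm_starProjection_sub_le_add K L M
  simpa only [← hK, ← hL, ← hM, ← ContinuousLinearMap.restrictScalars_sub,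
    ContinuousLinearMap.norm_restrictScalars] using triangle

section Length

variable {X E : Type*} [PseudoMetricSpace X] [NormedAddCommGroup E]
  {f : ℝ → X} {γ : ℝ → E} {φ : ℝ → ℝ} {a b : ℝ}

lemma continuousOn_of_dist_le_comp_norm_sub {s : Set ℝ} (hφ0 : φ 0 = 0) (hφ : ContinuousAt φ 0)
    (hγ : ContinuousOn γ s) (hdist : ∀ t ∈ s, ∀ z ∈ s, dist (f t) (f z) ≤ φ ‖γ t - γ z‖) :
    ContinuousOn f s := by
  intro t ht
  have norm_sub_tendsto : Tendsto (fun z => ‖γ z - γ t‖) (𝓝[s] t) (𝓝 0) :=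
    tendsto_iff_norm_sub_tendsto_zero.1 (hγ t ht)
  have bound_tendsto : Tendsto (fun z => φ ‖γ z - γ t‖) (𝓝[s] t) (𝓝 0) := by
    simpa only [hφ0, Function.comp_def] using hφ.tendsto.comp norm_sub_tendsto
  exact tendsto_iff_dist_tendsto_zero.2 <| squeeze_zero' (Eventually.of_forall fun _ => dist_nonneg)
    (eventually_mem_nhdsWithin.mono fun z hz => hdist z hz t ht) bound_tendsto

variable [NormedSpace ℝ E]

lemma hasDerivWithinAt_norm_sub_self {γ' : E} {t : ℝ} (h : HasDerivWithinAt γ γ' (Ici t) t) :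
    HasDerivWithinAt (fun z => ‖γ z - γ t‖) ‖γ'‖ (Ici t) t := by
  have slope_tendsto := (hasDerivWithinAt_iff_tendsto_slope' self_notMem_Ioi).1 h.Ioi_of_Ici |>.norm
  refine HasDerivWithinAt.Ici_of_Ioi ?_
  refine (hasDerivWithinAt_iff_tendsto_slope' self_notMem_Ioi).2 (slope_tendsto.congr' ?_)
  filter_upwards [self_mem_nhdsWithin] with z hz
  have hz_pos : 0 < z - t := sub_pos.2 hz
  simp only [slope_def_module, norm_smul, norm_inv, Real.norm_of_nonneg hz_pos.le, sub_self,
    norm_zero, sub_zero, smul_eq_mul]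

lemma frequently_slope_dist_lt {γ' : E} {t r : ℝ} (hγ : HasDerivWithinAt γ γ' (Ici t) t)
    (hφ0 : φ 0 = 0) (hφ : HasDerivAt φ 1 0) (hr : ‖γ'‖ < r)
    (hdist : ∀ᶠ z in 𝓝[>] t, dist (f z) (f t) ≤ φ ‖γ z - γ t‖) (p : X) :
    ∃ᶠ z in 𝓝[>] t, slope (fun z => dist p (f z)) t z < r := by
  have bound_deriv : HasDerivWithinAt (fun z => φ ‖γ z - γ t‖) ‖γ'‖ (Ici t) t := by
    have hφ_t : HasDerivAt φ 1 ‖γ t - γ t‖ := by rwa [sub_self, norm_zero]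
    simpa only [one_mul, Function.comp_def] using
      hφ_t.comp_hasDerivWithinAt t (hasDerivWithinAt_norm_sub_self hγ)
  refine ((bound_deriv.liminf_right_slope_le hr).and_eventually
    (hdist.and self_mem_nhdsWithin)).mono ?_
  rintro z ⟨slope_lt, dist_le, hz⟩
  have : 0 < z - t := sub_pos.2 hz
  refine lt_of_le_of_lt ?_ slope_lt
  simp only [slope_def_field, sub_self, norm_zero, hφ0, sub_zero]
  gcongr
  linarith [dist_triangle_right p (f z) (f t)]

lemma hasDerivWithinAt_integral_of_continuousOn [CompleteSpace E] {t : ℝ}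
    (hγ : ContinuousOn γ (Icc a b)) (ht : t ∈ Icc a b) :
    HasDerivWithinAt (fun u => ∫ x in a..u, γ x) (γ t) (Icc a b) t := by
  have : Fact (t ∈ Icc a b) := ⟨ht⟩
  have integrable : IntervalIntegrable γ volume a t :=
    (hγ.mono (Icc_subset_Icc_right ht.2)).intervalIntegrable_of_Icc ht.1
  exact intervalIntegral.integral_hasDerivWithinAt_right integrable
    (hγ.stronglyMeasurableAtFilter_nhdsWithin measurableSet_Icc t) (hγ t ht)

lemma dist_le_integral_norm_derivWithin (hab : a < b) (hγ : ContDiffOn ℝ 1 γ (Icc a b))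
    (hφ0 : φ 0 = 0) (hφ : HasDerivAt φ 1 0)
    (hdist : ∀ t ∈ Icc a b, ∀ z ∈ Icc a b, dist (f t) (f z) ≤ φ ‖γ t - γ z‖) :
    dist (f a) (f b) ≤ ∫ t in a..b, ‖derivWithin γ (Icc a b) t‖ := by
  have speed_cont : ContinuousOn (fun t => ‖derivWithin γ (Icc a b) t‖) (Icc a b) :=
    (hγ.continuousOn_derivWithin (uniqueDiffOn_Icc hab) le_rfl).norm
  have f_cont : ContinuousOn f (Icc a b) :=
    continuousOn_of_dist_le_comp_norm_sub hφ0 hφ.continuousAt hγ.continuousOn hdist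
  refine image_le_of_liminf_slope_right_le_deriv_boundary (f := fun t => dist (f a) (f t))
    (B := fun t => ∫ z in a..t, ‖derivWithin γ (Icc a b) z‖)
    (B' := fun t => ‖derivWithin γ (Icc a b) t‖)
    ((continuous_const.dist continuous_id).comp_continuousOn f_cont) (by simp)
    (fun t ht => (hasDerivWithinAt_integral_of_continuousOn speed_cont ht).continuousWithinAt)
    (fun t ht => ?_) (fun t ht r hr => ?_) (right_mem_Icc.2 hab.le)
  · exact (hasDerivWithinAt_integral_of_continuousOn speed_cont
      (Ico_subset_Icc_self ht)).mono_of_mem_nhdsWithin (Icc_mem_nhdsGE_of_mem ht)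
  · have ht' : t ∈ Icc a b := Ico_subset_Icc_self ht
    have γ_deriv : HasDerivWithinAt γ (derivWithin γ (Icc a b) t) (Ici t) t :=
      ((hγ.differentiableOn one_ne_zero t ht').hasDerivWithinAt).mono_of_mem_nhdsWithin
        (Icc_mem_nhdsGE_of_mem ht)
    refine frequently_slope_dist_lt γ_deriv hφ0 hφ hr ?_ (f a)
    filter_upwards [Icc_mem_nhdsGT_of_mem ht] with z hz
    exact hdist z hz t ht'

lemma norm_derivWithin_Icc_eqOn_norm_deriv :
    EqOn (fun t => ‖derivWithin γ (Icc a b) t‖) (fun t => ‖deriv γ t‖) (Ioo a b) :=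
  fun _ ht => by simp only [derivWithin_of_mem_nhds (Icc_mem_nhds ht.1 ht.2)]

lemma intervalIntegrable_norm_deriv (hab : a < b) (hγ : ContDiffOn ℝ 1 γ (Icc a b)) :
    IntervalIntegrable (fun t => ‖deriv γ t‖) volume a b := by
  have speed_cont : ContinuousOn (fun t => ‖derivWithin γ (Icc a b) t‖) (Icc a b) :=
    (hγ.continuousOn_derivWithin (uniqueDiffOn_Icc hab) le_rfl).norm
  refine (speed_cont.intervalIntegrable_of_Icc hab.le).congr_uIoo ?_
  rw [uIoo_of_le hab.le]
  exact norm_derivWithin_Icc_eqOn_norm_deriv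

lemma dist_le_integral_norm_deriv (hab : a < b) (hγ : ContDiffOn ℝ 1 γ (Icc a b))
    (hφ0 : φ 0 = 0) (hφ : HasDerivAt φ 1 0)
    (hdist : ∀ t ∈ Icc a b, ∀ z ∈ Icc a b, dist (f t) (f z) ≤ φ ‖γ t - γ z‖) :
    dist (f a) (f b) ≤ ∫ t in a..b, ‖deriv γ t‖ :=
  (dist_le_integral_norm_derivWithin hab hγ hφ0 hφ hdist).trans_eq <|
    intervalIntegral.integral_congr_Ioo_of_le hab.le norm_derivWithin_Icc_eqOn_norm_deriv

namespace PiecewiseC1On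

lemma le (hγ : PiecewiseC1On γ a b) : a ≤ b := by
  obtain ⟨n, t, rfl, rfl, ht, -⟩ := hγ
  exact monotoneOn_of_le_add_one ordConnected_Iic (fun i _ _ hi => (ht i hi).le)
    (mem_Iic.2 n.zero_le) self_mem_Iic n.zero_le

theorem dist_le_integral_norm_deriv (hγ : PiecewiseC1On γ a b)
    (hφ0 : φ 0 = 0) (hφ : HasDerivAt φ 1 0)
    (hdist : ∀ t ∈ Icc a b, ∀ z ∈ Icc a b, dist (f t) (f z) ≤ φ ‖γ t - γ z‖) :
    dist (f a) (f b) ≤ ∫ t in a..b, ‖deriv γ t‖ := by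
  obtain ⟨n, t, rfl, rfl, ht, hγ_piece⟩ := hγ
  have t_mono : MonotoneOn t (Iic n) :=
    monotoneOn_of_le_add_one ordConnected_Iic fun i _ _ hi => (ht i hi).le
  have piece_subset : ∀ i < n, Icc (t i) (t (i + 1)) ⊆ Icc (t 0) (t n) := fun i hi =>
    Icc_subset_Icc (t_mono (mem_Iic.2 n.zero_le) (mem_Iic.2 hi.le) i.zero_le)
      (t_mono (mem_Iic.2 hi) self_mem_Iic hi)
  calc
    dist (f (t 0)) (f (t n)) ≤ ∑ i ∈ Finset.range n, dist (f (t i)) (f (t (i + 1))) :=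
      dist_le_range_sum_dist (fun i => f (t i)) n
    _ ≤ ∑ i ∈ Finset.range n, ∫ x in t i..t (i + 1), ‖deriv γ x‖ := by
      refine Finset.sum_le_sum fun i hi => ?_
      have hi' : i < n := Finset.mem_range.1 hi
      exact _root_.dist_le_integral_norm_deriv (ht i hi') (hγ_piece i hi') hφ0 hφ fun x hx y hy =>
        hdist x (piece_subset i hi' hx) y (piece_subset i hi' hy)
    _ = ∫ x in t 0..t n, ‖deriv γ x‖ :=
      intervalIntegral.sum_integral_adjacent_intervals fun i hi =>
        intervalIntegrable_norm_deriv (ht i hi) (hγ_piece i hi)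

end PiecewiseC1On

end Length

theorem arcsine_law_smooth_general {𝕜 E : Type*} [RCLike 𝕜] [NormedAddCommGroup E]
    [InnerProductSpace 𝕜 E] [NormedSpace ℝ E] [SMulCommClass 𝕜 ℝ E] {a b : ℝ} {γ : ℝ → E →L[𝕜] E}
    (hproj : ∀ t ∈ Icc a b, (γ t : E →ₗ[𝕜] E).IsSymmetricProjection)
    (hγ : PiecewiseC1On γ a b) : arcsin ‖γ b - γ a‖ ≤ ∫ t in a..b, ‖deriv γ t‖ := by
  have ha : a ∈ Icc a b := left_mem_Icc.2 hγ.le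
  have arcsin_deriv : HasDerivAt arcsin 1 0 := by simpa using hasDerivAt_arcsin (x := 0)
  have triangle {t z : ℝ} (ht : t ∈ Icc a b) (hz : z ∈ Icc a b) :
      arcsin ‖γ z - γ a‖ ≤ arcsin ‖γ z - γ t‖ + arcsin ‖γ t - γ a‖ :=
    arcsin_norm_sub_le_add_of_isSymmetricProjection (hproj z hz) (hproj t ht) (hproj a ha)
  have length_bound := hγ.dist_le_integral_norm_deriv (f := fun t => arcsin ‖γ t - γ a‖)
    arcsin_zero arcsin_deriv fun t ht z hz => abs_sub_le_iff.2
      ⟨sub_le_iff_le_add.2 (triangle hz ht),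
        sub_le_iff_le_add.2 (norm_sub_rev (γ t) (γ z) ▸ triangle ht hz)⟩
  simpa [abs_of_nonneg, Real.dist_eq, arcsin_nonneg] using length_bound

/-- **Arcsine Law for smooth paths.** For a piecewise `C¹`-smooth path
`γ : [a,b] → 𝒫` of orthogonal projections,
`arcsin ‖γ(b) − γ(a)‖ ≤ ∫_a^b ‖γ'(t)‖ dt`. -/
theorem arcsine_law_smooth {H : Type*} [NormedAddCommGroup H] [InnerProductSpace ℂ H]
    [CompleteSpace H] [TopologicalSpace.SeparableSpace H]
    (a b : ℝ) (γ : ℝ → (H →L[ℂ] H))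
    (hproj : ∀ t ∈ Set.Icc a b, IsOrthogonalProjection (γ t))
    (hγ : PiecewiseC1On γ a b) :
    Real.arcsin ‖γ b - γ a‖ ≤ ∫ t in a..b, ‖deriv γ t‖ :=
  arcsine_law_smooth_general (fun t ht => isStarProjection_iff_isSymmetricProjection.1
    ⟨(hproj t ht).2, (hproj t ht).1⟩) hγ
end

section
/- Let γ : [a,b] → 𝒫 be a continuous path of orthogonal projections. Then there exists a sequence (γ_n) of piecewise C¹-smooth paths γ_n : [a,b] → 𝒫 with γ_n(a) = γ(a) and γ_n(b) = γ(b) for all n, such that γ_n converges to γ uniformly on [a,b] and the lengths converge: l(γ_n) → l(γ) in [0,∞]. -/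
open ContinuousLinearMap

/-!
Two projections `p`, `q` with `‖q - p‖ < 1` are joined by a smooth path of projections of length
`arcsin ‖q - p‖`: the unitary geodesic `exp (i t h) (2p - 1)` between the symmetries `2p - 1` and
`2q - 1`, where `exp (i h) = (2q - 1) (2p - 1)`, stays self-adjoint because `2p - 1` conjugates `h`
to `-h`. As `arcsin x / x → 1` when `x → 0`, replacing `γ` by such paths on the pieces of a fine
partition makes it longer by a factor of at most `1 + o(1)`. In the limit this bounds the lengths
from above, and the lower semicontinuity of the length gives the opposite bound.
-/

open Set Filter Topology
open scoped NNReal ENNReal Real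

theorem eVariationOn_Icc_le_of_lipschitzOnWith {E : Type*} [PseudoEMetricSpace E] {K : ℝ≥0}
    {f : ℝ → E} {a b : ℝ} (hf : LipschitzOnWith K f (Icc a b)) :
    eVariationOn f (Icc a b) ≤ K * ENNReal.ofReal (b - a) :=
  calc eVariationOn f (Icc a b) ≤ K * eVariationOn id (Icc a b) :=
        hf.comp_eVariationOn_le (mapsTo_id _)
    _ ≤ K * ENNReal.ofReal (b - a) := by
        gcongr
        simp

theorem tendsto_eVariationOn_of_le_mul {α E ι : Type*} [LinearOrder α] [PseudoEMetricSpace E]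
    {s : Set α} {F : ι → α → E} {f : α → E} {K : ι → ℝ≥0∞} {l : Filter ι}
    (hF : ∀ x ∈ s, Tendsto (fun i => F i x) l (𝓝 (f x))) (hK : Tendsto K l (𝓝 1))
    (hle : ∀ i, eVariationOn (F i) s ≤ K i * eVariationOn f s) :
    Tendsto (fun i => eVariationOn (F i) s) l (𝓝 (eVariationOn f s)) := by
  have hupper : Tendsto (fun i => K i * eVariationOn f s) l (𝓝 (eVariationOn f s)) := by
    simpa using ENNReal.Tendsto.mul_const hK (Or.inl one_ne_zero)
  refine tendsto_order.2 ⟨fun v hv => eVariationOn.lowerSemicontinuous_aux hF hv, fun v hv => ?_⟩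
  filter_upwards [hupper.eventually_lt_const hv] with i hi using (hle i).trans_lt hi

theorem interval_induction {P : ℝ → ℝ → Prop} {a b δ : ℝ} (hδ : 0 < δ) (hab : a ≤ b)
    (small : ∀ ⦃x y⦄, a ≤ x → x ≤ y → y ≤ b → y - x ≤ δ → P x y)
    (trans : ∀ ⦃x y z⦄, a ≤ x → x ≤ y → y ≤ z → z ≤ b → P x y → P y z → P x z) : P a b := by
  have key : ∀ n : ℕ, ∀ y, a ≤ y → y ≤ b → y - a ≤ n * δ → P a y := by
    intro n
    induction n with
    | zero =>
      intro y hay hyb hy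
      rw [Nat.cast_zero, zero_mul] at hy
      exact small le_rfl hay hyb (hy.trans hδ.le)
    | succ n ih =>
      intro y hay hyb hy
      have hm : a ≤ max a (y - δ) := le_max_left _ _
      have hmy : max a (y - δ) ≤ y := max_le hay (by linarith)
      have hma : max a (y - δ) - a ≤ n * δ := by
        rw [sub_le_iff_le_add]
        push_cast at hy
        exact max_le (by linarith [mul_nonneg n.cast_nonneg hδ.le]) (by linarith)
      exact trans le_rfl hm hmy hyb (ih _ hm (hmy.trans hyb) hma)
        (small hm hmy hyb (by linarith [le_max_right a (y - δ)]))
  obtain ⟨n, hn⟩ := exists_nat_ge ((b - a) / δ)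
  exact key n b hab le_rfl ((div_le_iff₀ hδ).1 hn)

namespace PiecewiseC1On

variable {E : Type*} [NormedAddCommGroup E] [NormedSpace ℝ E] {f g : ℝ → E} {a b c : ℝ}

theorem refl (f : ℝ → E) (a : ℝ) : PiecewiseC1On f a a :=
  ⟨0, fun _ => a, rfl, rfl, by simp, by simp⟩

theorem of_contDiffOn (hab : a < b) (hf : ContDiffOn ℝ 1 f (Icc a b)) : PiecewiseC1On f a b :=
  ⟨1, fun i => if i = 0 then a else b, rfl, rfl, by simpa using hab, by simpa using hf⟩

theorem congr (hf : PiecewiseC1On f a b) (hfg : EqOn g f (Icc a b)) : PiecewiseC1On g a b := by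
  obtain ⟨n, t, rfl, rfl, hlt, hC⟩ := hf
  have hmono : MonotoneOn t (Icc 0 n) :=
    monotoneOn_of_le_add_one ordConnected_Icc fun i _ _ hi => (hlt i hi.2).le
  refine ⟨n, t, rfl, rfl, hlt, fun i hi => (hC i hi).congr (hfg.mono (Icc_subset_Icc ?_ ?_))⟩
  · exact hmono (by simp) ⟨i.zero_le, hi.le⟩ i.zero_le
  · exact hmono ⟨(i + 1).zero_le, hi⟩ (by simp) hi

theorem trans (hab : PiecewiseC1On f a b) (hbc : PiecewiseC1On f b c) : PiecewiseC1On f a c := by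
  obtain ⟨m, t, ht0, htm, htlt, htC⟩ := hab
  obtain ⟨n, u, hu0, hun, hult, huC⟩ := hbc
  let v : ℕ → ℝ := fun i => if i ≤ m then t i else u (i - m)
  have hvt : ∀ i ≤ m, v i = t i := fun i hi => if_pos hi
  have hvu : ∀ j, v (m + j) = u j := by
    rintro (_ | j)
    · exact (hvt m le_rfl).trans (htm.trans hu0.symm)
    · simp [v]
  have hv : ∀ i < m + n, v i < v (i + 1) ∧ ContDiffOn ℝ 1 f (Icc (v i) (v (i + 1))) := by
    intro i hi
    rcases lt_or_ge i m with him | him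
    · rw [hvt i him.le, hvt (i + 1) him]
      exact ⟨htlt i him, htC i him⟩
    · obtain ⟨j, rfl⟩ := Nat.exists_eq_add_of_le him
      have hj : j < n := by omega
      rw [add_assoc, hvu j, hvu (j + 1)]
      exact ⟨hult j hj, huC j hj⟩
  exact ⟨m + n, v, (hvt 0 m.zero_le).trans ht0, (hvu n).trans hun, fun i hi => (hv i hi).1,
    fun i hi => (hv i hi).2⟩

end PiecewiseC1On

section Approximation

variable {E : Type*} [NormedAddCommGroup E] [NormedSpace ℝ E] {s : Set E} {γ Γ Γ₁ Γ₂ : ℝ → E}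
  {ε : ℝ≥0∞} {K : ℝ≥0} {a b c : ℝ}

/-- The intrinsic path metric of `s` is infinitesimally the norm metric: nearby points `p` and `q`
of `s` are joined inside `s` by a `C¹` path whose length is at most `K` times their distance, where
the factor `K > 1` is arbitrary and determines how near `p` and `q` have to be. -/
def IsLocallyAlmostGeodesic (s : Set E) : Prop :=
  ∀ K : ℝ≥0, 1 < K → ∃ δ > 0, ∀ p ∈ s, ∀ q ∈ s, edist p q < δ →
    ∃ φ : ℝ → E, ContDiffOn ℝ 1 φ (Icc 0 1) ∧ MapsTo φ (Icc 0 1) s ∧ φ 0 = p ∧ φ 1 = q ∧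
      eVariationOn φ (Icc 0 1) ≤ K * edist p q

/-- `Γ` is a piecewise `C¹` path in `s` on `[a, b]` with the endpoints of `γ`, at uniform distance
at most `ε` from `γ` and at most `K` times as long. The point of bundling these properties is that
they are stable under concatenation. -/
structure IsPiecewiseC1Approx (s : Set E) (γ : ℝ → E) (ε : ℝ≥0∞) (K : ℝ≥0) (Γ : ℝ → E)
    (a b : ℝ) : Prop where
  piecewiseC1On : PiecewiseC1On Γ a b
  mapsTo : MapsTo Γ (Icc a b) s
  left_eq : Γ a = γ a
  right_eq : Γ b = γ b
  edist_le : ∀ t ∈ Icc a b, edist (Γ t) (γ t) ≤ ε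
  eVariationOn_le : eVariationOn Γ (Icc a b) ≤ K * eVariationOn γ (Icc a b)

namespace IsPiecewiseC1Approx

theorem refl (ha : γ a ∈ s) : IsPiecewiseC1Approx s γ ε K γ a a where
  piecewiseC1On := .refl γ a
  mapsTo := by simpa using ha
  left_eq := rfl
  right_eq := rfl
  edist_le := by simp
  eVariationOn_le := by simp [eVariationOn.subsingleton]

theorem congr (h : IsPiecewiseC1Approx s γ ε K Γ₁ a b) (hab : a ≤ b)
    (heq : EqOn Γ Γ₁ (Icc a b)) : IsPiecewiseC1Approx s γ ε K Γ a b where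
  piecewiseC1On := h.piecewiseC1On.congr heq
  mapsTo := h.mapsTo.congr heq.symm
  left_eq := (heq (left_mem_Icc.2 hab)).trans h.left_eq
  right_eq := (heq (right_mem_Icc.2 hab)).trans h.right_eq
  edist_le t ht := (heq ht).symm ▸ h.edist_le t ht
  eVariationOn_le := (eVariationOn.congr heq).trans_le h.eVariationOn_le

theorem trans (hab : a ≤ b) (hbc : b ≤ c) (h₁ : IsPiecewiseC1Approx s γ ε K Γ a b)
    (h₂ : IsPiecewiseC1Approx s γ ε K Γ b c) : IsPiecewiseC1Approx s γ ε K Γ a c where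
  piecewiseC1On := h₁.piecewiseC1On.trans h₂.piecewiseC1On
  mapsTo := Icc_union_Icc_eq_Icc hab hbc ▸ h₁.mapsTo.union h₂.mapsTo
  left_eq := h₁.left_eq
  right_eq := h₂.right_eq
  edist_le t ht := (le_total t b).elim (fun h => h₁.edist_le t ⟨ht.1, h⟩)
    (fun h => h₂.edist_le t ⟨h, ht.2⟩)
  eVariationOn_le := by
    have hadd (f : ℝ → E) :
        eVariationOn f (Icc a b) + eVariationOn f (Icc b c) = eVariationOn f (Icc a c) := by
      simpa using eVariationOn.Icc_add_Icc f hab hbc (mem_univ b)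
    rw [← hadd Γ, ← hadd γ, mul_add]
    exact add_le_add h₁.eVariationOn_le h₂.eVariationOn_le

theorem concat (hab : a ≤ b) (hbc : b ≤ c) (h₁ : IsPiecewiseC1Approx s γ ε K Γ₁ a b)
    (h₂ : IsPiecewiseC1Approx s γ ε K Γ₂ b c) :
    IsPiecewiseC1Approx s γ ε K ((Iic b).piecewise Γ₁ Γ₂) a c := by
  have hleft : EqOn ((Iic b).piecewise Γ₁ Γ₂) Γ₁ (Icc a b) :=
    (piecewise_eqOn (Iic b) Γ₁ Γ₂).mono Icc_subset_Iic_self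
  have hright : EqOn ((Iic b).piecewise Γ₁ Γ₂) Γ₂ (Icc b c) := by
    intro t ht
    rcases ht.1.eq_or_lt with rfl | hbt
    · rw [hleft (right_mem_Icc.2 hab), h₁.right_eq, h₂.left_eq]
    · exact piecewise_eq_of_notMem _ _ _ hbt.not_ge
  exact (h₁.congr hab hleft).trans hab hbc (h₂.congr hbc hright)

theorem of_unitInterval {φ : ℝ → E} (hab : a < b) (hφ : ContDiffOn ℝ 1 φ (Icc 0 1))
    (hφs : MapsTo φ (Icc 0 1) s) (hφ0 : φ 0 = γ a) (hφ1 : φ 1 = γ b)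
    (hlen : eVariationOn φ (Icc 0 1) ≤ K * edist (γ a) (γ b))
    (hγ : ∀ t ∈ Icc a b, edist (γ a) (γ t) ≤ ε) :
    IsPiecewiseC1Approx s γ ((K + 1) * ε) K (fun t => φ ((t - a) / (b - a))) a b := by
  have hba : 0 < b - a := sub_pos.2 hab
  have hmaps : MapsTo (fun t => (t - a) / (b - a)) (Icc a b) (Icc 0 1) := fun t ht =>
    ⟨div_nonneg (sub_nonneg.2 ht.1) hba.le, (div_le_one hba).2 (sub_le_sub_right ht.2 a)⟩
  have hmono : MonotoneOn (fun t => (t - a) / (b - a)) (Icc a b) := fun x _ y _ hxy => by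
    dsimp only; gcongr
  refine ⟨.of_contDiffOn hab (hφ.comp (by fun_prop) hmaps), hφs.comp hmaps, by simpa using hφ0,
    by simpa [hba.ne'] using hφ1, fun t ht => ?_, ?_⟩
  · calc edist (φ ((t - a) / (b - a))) (γ t)
        ≤ edist (φ ((t - a) / (b - a))) (φ 0) + edist (γ a) (γ t) :=
          hφ0 ▸ edist_triangle _ _ _
      _ ≤ K * ε + ε := by
          gcongr
          · exact (eVariationOn.edist_le φ (hmaps ht) (by simp)).trans
              (hlen.trans (by gcongr; exact hγ b (right_mem_Icc.2 hab.le)))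
          · exact hγ t ht
      _ = (K + 1) * ε := by ring
  · calc eVariationOn (fun t => φ ((t - a) / (b - a))) (Icc a b) ≤ eVariationOn φ (Icc 0 1) :=
          eVariationOn.comp_le_of_monotoneOn φ _ hmono hmaps
      _ ≤ K * edist (γ a) (γ b) := hlen
      _ ≤ K * eVariationOn γ (Icc a b) := by
          gcongr
          exact eVariationOn.edist_le γ (left_mem_Icc.2 hab.le) (right_mem_Icc.2 hab.le)

end IsPiecewiseC1Approx

namespace IsLocallyAlmostGeodesic

theorem exists_isPiecewiseC1Approx (hs : IsLocallyAlmostGeodesic s) (hab : a ≤ b)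
    (hγs : MapsTo γ (Icc a b) s) (hγ : ContinuousOn γ (Icc a b)) (hK : 1 < K) (hε : 0 < ε) :
    ∃ Γ, IsPiecewiseC1Approx s γ ε K Γ a b := by
  obtain ⟨δ, hδ, hjoin⟩ := hs K hK
  obtain ⟨η, hη, hηδ, hηε⟩ : ∃ η > 0, η < δ ∧ (K + 1) * η ≤ ε := by
    obtain ⟨η, hη, hη'⟩ := exists_between
      (lt_min hδ (ENNReal.div_pos hε.ne' (by finiteness : (K + 1 : ℝ≥0∞) ≠ ∞)))
    refine ⟨η, hη, hη'.trans_le (min_le_left _ _), ?_⟩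
    exact mul_comm η _ ▸ ENNReal.mul_le_of_le_div (hη'.le.trans (min_le_right _ _))
  obtain ⟨r, hr, hγr⟩ : ∃ r > 0, ∀ x ∈ Icc a b, ∀ y ∈ Icc a b, dist x y < r →
      edist (γ x) (γ y) < η := by
    have hunif := isCompact_Icc.uniformContinuousOn_of_continuous hγ
    obtain ⟨r, hr, hγr⟩ := ((Metric.uniformity_basis_dist.inf_principal _).tendsto_iff
      uniformity_basis_edist).1 hunif η hη
    exact ⟨r, hr, fun x hx y hy hxy => hγr (x, y) ⟨hxy, hx, hy⟩⟩
  refine interval_induction (P := fun x y => ∃ Γ, IsPiecewiseC1Approx s γ ε K Γ x y)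
    (half_pos hr) hab (fun x y hax hxy hyb hyx => ?_) ?_
  · have hclose : ∀ t ∈ Icc x y, edist (γ x) (γ t) < η := fun t ht =>
      hγr x ⟨hax, hxy.trans hyb⟩ t ⟨hax.trans ht.1, ht.2.trans hyb⟩ (by
        rw [dist_comm, Real.dist_eq, abs_of_nonneg (sub_nonneg.2 ht.1)]
        linarith [ht.2])
    have hx : γ x ∈ s := hγs ⟨hax, hxy.trans hyb⟩
    rcases hxy.eq_or_lt with rfl | hlt
    · exact ⟨γ, .refl hx⟩
    obtain ⟨φ, hφ, hφs, hφ0, hφ1, hlen⟩ := hjoin (γ x) hx (γ y) (hγs ⟨hax.trans hxy, hyb⟩)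
      ((hclose y (right_mem_Icc.2 hxy)).trans hηδ)
    have happrox := IsPiecewiseC1Approx.of_unitInterval hlt hφ hφs hφ0 hφ1 hlen
      fun t ht => (hclose t ht).le
    exact ⟨_, { happrox with edist_le := fun t ht => (happrox.edist_le t ht).trans hηε }⟩
  · rintro x y z - hxy hyz - ⟨Γ₁, h₁⟩ ⟨Γ₂, h₂⟩
    exact ⟨_, h₁.concat hxy hyz h₂⟩

theorem exists_seq_piecewiseC1On (hs : IsLocallyAlmostGeodesic s) (hab : a ≤ b)
    (hγs : MapsTo γ (Icc a b) s) (hγ : ContinuousOn γ (Icc a b)) :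
    ∃ Γ : ℕ → ℝ → E,
      (∀ n, PiecewiseC1On (Γ n) a b ∧ MapsTo (Γ n) (Icc a b) s ∧ Γ n a = γ a ∧ Γ n b = γ b) ∧
      TendstoUniformlyOn Γ γ atTop (Icc a b) ∧
      Tendsto (fun n => eVariationOn (Γ n) (Icc a b)) atTop (𝓝 (eVariationOn γ (Icc a b))) := by
  obtain ⟨η, -, hη, hη0⟩ := exists_seq_strictAnti_tendsto (0 : ℝ≥0)
  have hη0' : Tendsto (fun n => (η n : ℝ≥0∞)) atTop (𝓝 0) := ENNReal.tendsto_coe.2 hη0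
  choose Γ hΓ using fun n => hs.exists_isPiecewiseC1Approx hab hγs hγ
    (lt_add_of_pos_right 1 (hη n)) (ENNReal.coe_pos.2 (hη n))
  have hunif : TendstoUniformlyOn Γ γ atTop (Icc a b) := by
    refine EMetric.tendstoUniformlyOn_iff.2 fun ε hε => ?_
    filter_upwards [hη0'.eventually_lt_const hε] with n hn t ht
    exact (edist_comm _ _).trans_lt (((hΓ n).edist_le t ht).trans_lt hn)
  refine ⟨Γ, fun n => ⟨(hΓ n).piecewiseC1On, (hΓ n).mapsTo, (hΓ n).left_eq, (hΓ n).right_eq⟩,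
    hunif, tendsto_eVariationOn_of_le_mul (fun t ht => hunif.tendsto_at ht) ?_
    fun n => (hΓ n).eVariationOn_le⟩
  simpa using hη0'.const_add 1

end IsLocallyAlmostGeodesic

end Approximation

theorem eventually_arcsin_le_mul {K : ℝ} (hK : 1 < K) :
    ∀ᶠ x in 𝓝[≥] (0 : ℝ), Real.arcsin x ≤ K * x := by
  have hderiv : HasDerivAt Real.arcsin 1 0 := by
    simpa using Real.hasDerivAt_arcsin (x := 0) (by norm_num) (by norm_num)
  have hlittleO := (hasDerivAt_iff_isLittleO.1 hderiv).def (sub_pos.2 hK)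
  filter_upwards [nhdsWithin_le_nhds hlittleO, self_mem_nhdsWithin] with x hx hx0
  simp only [Real.arcsin_zero, sub_zero, smul_eq_mul, mul_one, Real.norm_eq_abs,
    abs_of_nonneg (show 0 ≤ x from hx0)] at hx
  linarith [le_abs_self (Real.arcsin x - x)]

section Unitary

open selfAdjoint Unitary

section Exponential

variable {A : Type*} [NormedRing A] [NormedAlgebra ℂ A] [StarRing A] [ContinuousStar A]
  [CompleteSpace A] [StarModule ℂ A]

theorem expUnitary_neg (x : selfAdjoint A) : expUnitary (-x) = star (expUnitary x) := by
  refine eq_inv_of_mul_eq_one_left ?_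
  rw [← (Commute.refl (x : A)).neg_left.expUnitary_add, neg_add_cancel, expUnitary_zero]

theorem contDiff_expUnitary_smul (x : selfAdjoint A) {n : WithTop ℕ∞} :
    ContDiff ℝ n fun t : ℝ => (expUnitary (t • x) : A) := by
  have hexp : ContDiff ℝ n (NormedSpace.exp : A → A) :=
    contDiff_iff_contDiffAt.2 fun y => (NormedSpace.exp_analytic (𝕂 := ℝ) y).contDiffAt
  have hlin : ContDiff ℝ n fun t : ℝ => Complex.I • t • (x : A) :=
    (contDiff_id.smul contDiff_const).const_smul Complex.I
  exact hexp.comp hlin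

theorem conj_expUnitary {w : unitary A} {x y : selfAdjoint A} (h : (w * x * star w : A) = y) :
    w * expUnitary x * star w = expUnitary y := by
  let +nondep : NormedAlgebra ℚ A := .restrictScalars ℚ ℂ A
  have hcont : Continuous (conjStarAlgAut ℂ A w) := by
    simp only [funext (conjStarAlgAut_apply w)]
    fun_prop
  ext
  simpa [← h] using NormedSpace.map_exp (conjStarAlgAut ℂ A w) hcont (Complex.I • (x : A))

end Exponential

variable {A : Type*} [CStarAlgebra A]

theorem norm_expUnitary_sub_one_le (x : selfAdjoint A) : ‖(expUnitary x - 1 : A)‖ ≤ ‖x‖ := by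
  nontriviality A
  rcases le_total ‖x‖ π with hx | hx
  · rw [← sq_le_sq₀ (norm_nonneg _) (norm_nonneg _), norm_sq_expUnitary_sub_one hx]
    linarith [Real.one_sub_sq_div_two_le_cos (x := ‖x‖)]
  · calc ‖(expUnitary x - 1 : A)‖ ≤ ‖(expUnitary x : A)‖ + ‖(1 : A)‖ := norm_sub_le _ _
      _ = 2 := by rw [CStarRing.norm_coe_unitary, CStarRing.norm_one]; norm_num
      _ ≤ ‖x‖ := Real.two_le_pi.trans hx

theorem lipschitzWith_expUnitary_smul (x : selfAdjoint A) :
    LipschitzWith ‖x‖₊ fun t : ℝ => (expUnitary (t • x) : A) := by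
  refine LipschitzWith.of_dist_le_mul fun r t => ?_
  have hcomm : Commute (((r - t) • x : selfAdjoint A) : A) (t • x : selfAdjoint A) :=
    ((Commute.refl (x : A)).smul_left _).smul_right _
  have hmul : expUnitary (r • x) = expUnitary ((r - t) • x) * expUnitary (t • x) := by
    rw [← hcomm.expUnitary_add, ← add_smul, sub_add_cancel]
  calc dist (expUnitary (r • x) : A) (expUnitary (t • x))
      = ‖((expUnitary ((r - t) • x) : A) - 1) * expUnitary (t • x)‖ := by
        rw [dist_eq_norm, hmul, sub_mul, one_mul, Submonoid.coe_mul]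
    _ ≤ ‖(r - t) • x‖ := by
        rw [CStarRing.norm_mul_coe_unitary]
        exact norm_expUnitary_sub_one_le _
    _ = ‖(r - t) • (x : A)‖ := rfl
    _ = ‖x‖₊ * dist r t := by
        rw [norm_smul, mul_comm, ← dist_eq_norm]
        rfl

theorem norm_argSelfAdjoint_eq_two_mul_arcsin {u : unitary A} (hu : ‖(u - 1 : A)‖ < 2) :
    ‖argSelfAdjoint u‖ = 2 * Real.arcsin (‖(u - 1 : A)‖ / 2) := by
  set θ := ‖argSelfAdjoint u‖
  have hθ : 0 ≤ θ ∧ θ ≤ π := ⟨norm_nonneg _, norm_argSelfAdjoint_le_pi u⟩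
  have hsin : Real.sin (θ / 2) = ‖(u - 1 : A)‖ / 2 := by
    have hcos := two_mul_one_sub_cos_norm_argSelfAdjoint hu
    rw [← sq_eq_sq₀ (Real.sin_nonneg_of_nonneg_of_le_pi (by linarith) (by linarith))
      (by positivity), Real.sin_sq_eq_half_sub, mul_div_cancel₀ _ two_ne_zero]
    linarith
  rw [← hsin, Real.arcsin_sin] <;> linarith

theorem norm_argSelfAdjoint_lt_pi {u : unitary A} (hu : ‖(u - 1 : A)‖ < 2) :
    ‖argSelfAdjoint u‖ < π := by
  have harcsin : Real.arcsin (‖(u - 1 : A)‖ / 2) < π / 2 :=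
    Real.arcsin_lt_pi_div_two.2 (by linarith)
  linarith [norm_argSelfAdjoint_eq_two_mul_arcsin hu]

theorem conj_argSelfAdjoint {u w : unitary A} (hu : ‖(u - 1 : A)‖ < 2)
    (h : w * u * star w = star u) :
    (w * argSelfAdjoint u * star w : A) = -argSelfAdjoint u := by
  set x := argSelfAdjoint u
  have hx : ‖x‖ < π := norm_argSelfAdjoint_lt_pi hu
  let y : selfAdjoint A := ⟨w * x * star w, x.2.conjugate _⟩
  have hy : ‖y‖ = ‖x‖ :=
    (CStarRing.norm_mul_coe_unitary _ (star w)).trans (CStarRing.norm_coe_unitary_mul w _)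
  have hexp : expUnitary y = expUnitary (-x) := by
    rw [← conj_expUnitary (x := x) (y := y) rfl, expUnitary_neg, expUnitary_argSelfAdjoint hu, h]
  have hyx : y = -x :=
    calc y = argSelfAdjoint (expUnitary y) := (argSelfAdjoint_expUnitary (hy ▸ hx)).symm
      _ = -x := hexp ▸ argSelfAdjoint_expUnitary (by rwa [norm_neg])
  exact congrArg Subtype.val hyx

/-- The geodesic `t ↦ exp (i t h) u` of the unitary group, where `exp (i h) = v u⁻¹`. It extends
`Unitary.path u v` to the real line. For `‖v - u‖ = 2` the logarithm `h` may be the junk value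
`0`. -/
noncomputable def unitaryGeodesic (u v : unitary A) (t : ℝ) : unitary A :=
  expUnitary (t • argSelfAdjoint (v * star u)) * u

namespace unitaryGeodesic

variable {u v : unitary A}

theorem zero (u v : unitary A) : unitaryGeodesic u v 0 = u := by simp [unitaryGeodesic]

theorem one (h : ‖(v - u : A)‖ < 2) : unitaryGeodesic u v 1 = v := by
  simp [unitaryGeodesic, expUnitary_eq_mul_inv v u h, mul_assoc]

theorem contDiff (u v : unitary A) {n : WithTop ℕ∞} :
    ContDiff ℝ n fun t => (unitaryGeodesic u v t : A) :=
  (contDiff_expUnitary_smul _).mul contDiff_const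

theorem dist_le (h : ‖(v - u : A)‖ < 2) (r t : ℝ) :
    dist (unitaryGeodesic u v r : A) (unitaryGeodesic u v t) ≤
      2 * Real.arcsin (‖(v - u : A)‖ / 2) * dist r t := by
  rw [norm_sub_eq v u] at h ⊢
  rw [← norm_argSelfAdjoint_eq_two_mul_arcsin h, dist_eq_norm, unitaryGeodesic, unitaryGeodesic,
    Submonoid.coe_mul, Submonoid.coe_mul, ← sub_mul, CStarRing.norm_mul_coe_unitary, ← dist_eq_norm]
  exact (lipschitzWith_expUnitary_smul _).dist_le_mul r t

theorem isSelfAdjoint (hu : IsSelfAdjoint u) (hv : IsSelfAdjoint v) (h : ‖(v - u : A)‖ < 2)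
    (t : ℝ) : IsSelfAdjoint (unitaryGeodesic u v t) := by
  set x := argSelfAdjoint (v * star u)
  have huu : u * u = 1 := by simpa [hu.star_eq] using Unitary.mul_star_self u
  have harg : (u * x * star u : A) = -x :=
    conj_argSelfAdjoint (norm_sub_eq v u ▸ h)
      (by rw [star_mul, star_star, hu.star_eq, hv.star_eq, mul_assoc, mul_assoc, huu, mul_one])
  have hexp : u * expUnitary (t • x) * star u = star (expUnitary (t • x)) := by
    rw [← expUnitary_neg]
    refine conj_expUnitary ?_
    rw [AddSubgroup.coe_neg, selfAdjoint.val_smul, mul_smul_comm, smul_mul_assoc, harg, smul_neg]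
  calc star (expUnitary (t • x) * u) = star u * (u * expUnitary (t • x) * star u) := by
        rw [star_mul, hexp]
    _ = expUnitary (t • x) * u := by
        rw [mul_assoc, ← mul_assoc, Unitary.star_mul_self, one_mul, hu.star_eq]

end unitaryGeodesic

end Unitary

section Projections

theorem isStarProjection_inv_two_smul_one_add {R : Type*} [Ring R]
    [StarRing R] [Algebra ℝ R] [StarModule ℝ R] {u : unitary R} (hu : IsSelfAdjoint u) :
    IsStarProjection ((2⁻¹ : ℝ) • (1 + u : R)) := by
  have hu' : star (u : R) = u := congrArg Subtype.val hu.star_eq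
  have huu : (u * u : R) = 1 := by simpa [hu'] using Unitary.coe_mul_star_self u
  have hsq : (1 + u : R) * (1 + u) = (2 : ℝ) • (1 + u : R) := by
    rw [two_smul, mul_add, add_mul, add_mul, huu]
    simp only [one_mul, mul_one]
    abel
  refine ⟨?_, ?_⟩
  · rw [IsIdempotentElem, smul_mul_smul_comm, hsq, smul_smul]
    norm_num
  · simp [isSelfAdjoint_iff, hu']

variable {A : Type*} [CStarAlgebra A] {p q : A}

/-- The symmetry `2p - 1`, which is `1` on the range of `p` and `-1` on its orthogonal complement.
It turns projections into self-adjoint unitaries, to which the geodesics of the unitary group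
apply. -/
def projectionSymmetry (hp : IsStarProjection p) : unitary A :=
  ⟨2 * p - 1, hp.two_mul_sub_one_mem_unitary⟩

theorem isSelfAdjoint_projectionSymmetry (hp : IsStarProjection p) :
    IsSelfAdjoint (projectionSymmetry hp) := by
  ext
  simp [projectionSymmetry, two_mul, hp.isSelfAdjoint.star_eq]

theorem norm_projectionSymmetry_sub (hp : IsStarProjection p) (hq : IsStarProjection q) :
    ‖(projectionSymmetry hq - projectionSymmetry hp : A)‖ = 2 * ‖q - p‖ := by
  have h : (projectionSymmetry hq - projectionSymmetry hp : A) = (2 : ℝ) • (q - p) := by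
    rw [projectionSymmetry, projectionSymmetry, sub_sub_sub_cancel_right, ← mul_sub, two_mul,
      two_smul]
  rw [h, norm_smul, Real.norm_two]

/-- The image of the geodesic between the symmetries `2p - 1` and `2q - 1` under the inverse
`u ↦ (1 + u) / 2` of `p ↦ 2p - 1`. -/
noncomputable def projectionGeodesic (hp : IsStarProjection p) (hq : IsStarProjection q) (t : ℝ) :
    A :=
  (2⁻¹ : ℝ) • (1 + unitaryGeodesic (projectionSymmetry hp) (projectionSymmetry hq) t : A)

namespace projectionGeodesic

variable (hp : IsStarProjection p) (hq : IsStarProjection q)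

theorem zero : projectionGeodesic hp hq 0 = p := by
  simp [projectionGeodesic, unitaryGeodesic.zero, projectionSymmetry, two_mul, ← two_smul ℝ p]

theorem one (h : ‖q - p‖ < 1) : projectionGeodesic hp hq 1 = q := by
  have hsymm := norm_projectionSymmetry_sub hp hq
  rw [projectionGeodesic, unitaryGeodesic.one (by linarith)]
  simp [projectionSymmetry, two_mul, ← two_smul ℝ q]

theorem contDiff {n : WithTop ℕ∞} : ContDiff ℝ n (projectionGeodesic hp hq) :=
  contDiff_const.smul (contDiff_const.add (unitaryGeodesic.contDiff _ _))

theorem isStarProjection (h : ‖q - p‖ < 1) (t : ℝ) :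
    IsStarProjection (projectionGeodesic hp hq t) :=
  isStarProjection_inv_two_smul_one_add <|
    unitaryGeodesic.isSelfAdjoint (isSelfAdjoint_projectionSymmetry hp)
      (isSelfAdjoint_projectionSymmetry hq) (by linarith [norm_projectionSymmetry_sub hp hq]) t

theorem lipschitzWith (h : ‖q - p‖ < 1) :
    LipschitzWith (Real.arcsin ‖q - p‖).toNNReal (projectionGeodesic hp hq) := by
  have hsymm := norm_projectionSymmetry_sub hp hq
  refine LipschitzWith.of_dist_le' fun r t => ?_
  have hdist := unitaryGeodesic.dist_le (u := projectionSymmetry hp) (v := projectionSymmetry hq)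
    (by linarith) r t
  rw [hsymm, mul_div_cancel_left₀ _ two_ne_zero] at hdist
  rw [projectionGeodesic, projectionGeodesic, dist_smul₀, dist_add_left, norm_inv, Real.norm_two]
  linarith

end projectionGeodesic

theorem isLocallyAlmostGeodesic_isStarProjection :
    IsLocallyAlmostGeodesic {p : A | IsStarProjection p} := by
  intro K hK
  obtain ⟨δ, hδ, hδK⟩ := mem_nhdsGE_iff_exists_Ico_subset.1
    (eventually_arcsin_le_mul (NNReal.one_lt_coe.2 hK))
  have hδ0 : 0 < min δ 1 := lt_min hδ one_pos
  refine ⟨ENNReal.ofReal (min δ 1), ENNReal.ofReal_pos.2 hδ0, fun p hp q hq hpq => ?_⟩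
  rw [edist_comm, edist_dist, ENNReal.ofReal_lt_ofReal_iff hδ0, lt_min_iff, dist_eq_norm] at hpq
  refine ⟨projectionGeodesic hp hq, (projectionGeodesic.contDiff hp hq).contDiffOn,
    fun t _ => projectionGeodesic.isStarProjection hp hq hpq.2 t, projectionGeodesic.zero hp hq,
    projectionGeodesic.one hp hq hpq.2, ?_⟩
  calc eVariationOn (projectionGeodesic hp hq) (Icc 0 1)
      ≤ (Real.arcsin ‖q - p‖).toNNReal * ENNReal.ofReal (1 - 0) :=
        eVariationOn_Icc_le_of_lipschitzOnWith
          (projectionGeodesic.lipschitzWith hp hq hpq.2).lipschitzOnWith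
    _ = ENNReal.ofReal (Real.arcsin ‖q - p‖) := by simp [ENNReal.ofReal]
    _ ≤ ENNReal.ofReal (K * ‖q - p‖) :=
        ENNReal.ofReal_le_ofReal (hδK ⟨norm_nonneg _, hpq.1⟩)
    _ = K * edist p q := by
        rw [ENNReal.ofReal_mul K.coe_nonneg, ENNReal.ofReal_coe_nnreal, edist_comm, edist_dist,
          dist_eq_norm]

end Projections

theorem approx_by_piecewise_smooth_general {A : Type*} [CStarAlgebra A] (a b : ℝ) (hab : a ≤ b)
    (γ : ℝ → A) (hproj : ∀ t ∈ Icc a b, IsStarProjection (γ t)) (hcont : ContinuousOn γ (Icc a b)) :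
    ∃ Γ : ℕ → ℝ → A,
      (∀ n, PiecewiseC1On (Γ n) a b ∧ (∀ t ∈ Icc a b, IsStarProjection (Γ n t)) ∧
        Γ n a = γ a ∧ Γ n b = γ b) ∧
      TendstoUniformlyOn Γ γ atTop (Icc a b) ∧
      Tendsto (fun n => eVariationOn (Γ n) (Icc a b)) atTop (𝓝 (eVariationOn γ (Icc a b))) :=
  isLocallyAlmostGeodesic_isStarProjection.exists_seq_piecewiseC1On hab hproj hcont

theorem isOrthogonalProjection_iff_isStarProjection {H : Type*} [NormedAddCommGroup H]
    [InnerProductSpace ℂ H] [CompleteSpace H] {P : H →L[ℂ] H} :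
    IsOrthogonalProjection P ↔ IsStarProjection P :=
  and_comm.trans (isStarProjection_iff P).symm

/-- Any continuous path `γ : [a,b] → 𝒫` of orthogonal projections can be
uniformly approximated by piecewise `C¹`-smooth paths of projections with the same endpoints,
whose lengths (total variations) converge to the length of `γ` in `[0,∞]`. -/
theorem approx_by_piecewise_smooth {H : Type*} [NormedAddCommGroup H] [InnerProductSpace ℂ H]
    [CompleteSpace H] [TopologicalSpace.SeparableSpace H]
    (a b : ℝ) (hab : a ≤ b) (γ : ℝ → (H →L[ℂ] H))
    (hproj : ∀ t ∈ Set.Icc a b, IsOrthogonalProjection (γ t))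
    (hcont : ContinuousOn γ (Set.Icc a b)) :
    ∃ Γ : ℕ → ℝ → (H →L[ℂ] H),
      (∀ n, PiecewiseC1On (Γ n) a b ∧
        (∀ t ∈ Set.Icc a b, IsOrthogonalProjection (Γ n t)) ∧
        Γ n a = γ a ∧ Γ n b = γ b) ∧
      TendstoUniformlyOn (fun n => Γ n) γ Filter.atTop (Set.Icc a b) ∧
      Filter.Tendsto (fun n => eVariationOn (Γ n) (Set.Icc a b)) Filter.atTop
        (nhds (eVariationOn γ (Set.Icc a b))) := by
  simp only [isOrthogonalProjection_iff_isStarProjection] at hproj ⊢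
  exact approx_by_piecewise_smooth_general a b hab γ hproj hcont
end
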